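/- arXiv:2004.03095 — 7 statements merged into one kernel-verified Lean document; each statement's English description precedes it below -/
import Mathlib

section
/- Let R be an irreducible GRRS in V and θ an automorphism of R with fixed roots S. Then either S = ∅, or S is a GRRS in span(S), or there exists an isotropic root α ∈ S such that S = T' ⊔ {α, −α}, where every root of T' := S∖{α,−α} is even, α is orthogonal to every element of T', and T' (if nonempty) is a reduced root system in span(T'), i.e., a GRRS in span(T') all of whose roots are even with 2β ∉ T' for every β ∈ T'. -/
/-!
The set `S` of fixed roots inherits every axiom of a GRRS except possibly nondegeneracy: the
reflections in fixed roots send fixed roots to fixed roots, and an injective self-map of a finite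
set is bijective. Nondegeneracy can only fail at an isotropic `α ∈ S` orthogonal to all of `S`.
The theorem then amounts to showing that `S` contains no odd root besides `±α`; for any other odd
`β ∈ S` a fixed root not orthogonal to `α` is produced.

Three facts about an irreducible GRRS `R` carry this.

* Finiteness: real roots of equal norm have pairing in `[-2, 2]`, with value `2` only if they
  coincide (`IsGRRS.abs_le_two`, `IsGRRS.eq_of_two_le`). Integrality: an isotropic root and a
  non-orthogonal real root have pairing `±1` or `±2` (`IsGRRS.iso_pairing`).
* Any two roots are non-orthogonal or have a common non-orthogonal neighbour
  (`IsGRRS.common_neighbour`).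
* If `x`, `y` are real roots of opposite norms `c`, `-c` and `x ± y` is fixed by `θ`, then `x` is
  fixed (`IsGRRS.fixed_of_opposite`): `θ x - x` has norm `(2 - k) c = -(2 - l) c` for the pairings
  `k` of `x, θ x` and `l` of `y, θ y`, so `k + l = 4` and hence `k = l = 2`.

If `β` is isotropic, a real common neighbour `γ` of `α` and `β` is fixed, because one of
`β ± α` equals `±γ` plus a root of the opposite norm (`IsGRRS.iso_complement`). If `β` is real and
`2β` is a root, an isotropic common neighbour `γ` gives a real root `δ = β ± γ` of norm
`-(β, β)`; one of `δ ± α` is a real root of norm `(β, β)`, and so `δ` is fixed.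
-/

namespace GRRS

open Submodule

variable {K V : Type*} [Field K] [CharZero K] [AddCommGroup V] [Module K V]

/-- A root `α` of `R` is *odd* if it is isotropic or `2α ∈ R`; it is *even* otherwise. -/
def IsOddRoot (B : LinearMap.BilinForm K V) (R : Set V) (α : V) : Prop :=
  B α α = 0 ∨ (2 : K) • α ∈ R

/-- `S` is a (finite) generalized reflection root system in `span(S)`, equipped with the
restriction of the symmetric bilinear form `B`.  Axiom (1) is automatic; axiom (2) says that
the functional `(α, ·)` is nonzero on `span(S)`, i.e. it does not vanish on all of `S`. -/
structure IsGRRSIn (B : LinearMap.BilinForm K V) (S : Set V) : Prop where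
  finite : S.Finite
  nonempty : S.Nonempty
  zero_not_mem : (0 : V) ∉ S
  form_ne : ∀ α ∈ S, ∃ β ∈ S, B α β ≠ 0
  reflect_real : ∀ α ∈ S, B α α ≠ 0 → ∀ β ∈ S,
      ∃ n : ℤ, 2 * B α β = (n : K) * B α α ∧ β - (n : K) • α ∈ S
  reflect_iso : ∀ α ∈ S, B α α = 0 → ∃ r : V → V, Set.BijOn r S S ∧
      (∀ β ∈ S, B α β = 0 → r β = β) ∧
      (∀ β ∈ S, B α β ≠ 0 → r β = β + α ∨ r β = β - α)
  neg_mem : ∀ α ∈ S, -α ∈ S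

/-- `R` is a (finite) generalized reflection root system in `V`. -/
structure IsGRRS (B : LinearMap.BilinForm K V) (R : Set V) : Prop where
  finite : R.Finite
  nonempty : R.Nonempty
  zero_not_mem : (0 : V) ∉ R
  spans : span K R = ⊤
  form_ne : ∀ α ∈ R, B α ≠ 0
  reflect_real : ∀ α ∈ R, B α α ≠ 0 → ∀ β ∈ R,
      ∃ n : ℤ, 2 * B α β = (n : K) * B α α ∧ β - (n : K) • α ∈ R
  reflect_iso : ∀ α ∈ R, B α α = 0 → ∃ r : V → V, Set.BijOn r R R ∧
      (∀ β ∈ R, B α β = 0 → r β = β) ∧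
      (∀ β ∈ R, B α β ≠ 0 → r β = β + α ∨ r β = β - α)
  neg_mem : ∀ α ∈ R, -α ∈ R

/-- `R` is irreducible: it cannot be partitioned into two nonempty mutually
orthogonal subsets. -/
def GRRSIrreducible (B : LinearMap.BilinForm K V) (R : Set V) : Prop :=
  ¬ ∃ R₁ R₂ : Set V, R₁.Nonempty ∧ R₂.Nonempty ∧ R₁ ∪ R₂ = R ∧ Disjoint R₁ R₂ ∧
      ∀ α ∈ R₁, ∀ β ∈ R₂, B α β = 0

/-- The real (non-isotropic) roots of `R`. -/
def realRoots (B : LinearMap.BilinForm K V) (R : Set V) : Set V :=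
  {α ∈ R | B α α ≠ 0}

/-- The imaginary (isotropic) roots of `R`. -/
def imRoots (B : LinearMap.BilinForm K V) (R : Set V) : Set V :=
  {α ∈ R | B α α = 0}

/-- Two vectors are chain-connected through `C` if they are joined by a chain of elements
of `C` in which consecutive elements have nonzero inner product. -/
def chainConnected (B : LinearMap.BilinForm K V) (C : Set V) : V → V → Prop :=
  Relation.ReflTransGen (fun x y => x ∈ C ∧ y ∈ C ∧ B x y ≠ 0)

/-- The reflection in a non-isotropic vector `γ`. -/
def reflectionOf (B : LinearMap.BilinForm K V) (γ x : V) : V :=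
  x - (2 * B γ x / B γ γ) • γ

/-- `weylRel B C x y` holds iff `y` is obtained from `x` by applying a finite sequence of
reflections in elements of `C`; for `C` a set of real roots this is the relation
"`x` and `y` lie in the same orbit of the Weyl group generated by `C`". -/
def weylRel (B : LinearMap.BilinForm K V) (C : Set V) : V → V → Prop :=
  Relation.ReflTransGen (fun x y => ∃ γ ∈ C, y = reflectionOf B γ x)

/-- The canonical decomposition `V = V₀ ⊕ V₁ ⊕ ⋯ ⊕ V_n` attached to a GRRS `R`:
`comp i` is the `i`-th irreducible component `R_re^i` of the real roots (a chain-connectivity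
class), `proj i.succ` is the projection `p_i` onto `V_i = span(comp i)` and `proj 0` is the
projection `p_0` onto `V₀`, the orthogonal complement of `U = span(R_re)`. -/
structure RealDecomp (B : LinearMap.BilinForm K V) (R : Set V) (n : ℕ) where
  comp : Fin n → Set V
  proj : Fin (n + 1) → (V →ₗ[K] V)
  comp_subset : ∀ i, comp i ⊆ realRoots B R
  comp_cover : realRoots B R ⊆ ⋃ i, comp i
  comp_classes : ∀ i, ∀ α ∈ comp i, ∀ β ∈ realRoots B R,
      (β ∈ comp i ↔ chainConnected B (realRoots B R) α β)
  proj_sum : ∑ i, proj i = LinearMap.id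
  proj_comp : ∀ i j, i ≠ j → (proj i) ∘ₗ (proj j) = 0
  proj_orth : ∀ i j, i ≠ j → ∀ x y : V, B (proj i x) (proj j y) = 0
  range_succ : ∀ i : Fin n, LinearMap.range (proj i.succ) = span K (comp i)
  range_zero : LinearMap.range (proj 0) =
      LinearMap.BilinForm.orthogonal B (span K (realRoots B R))

/-! ### Pairings between roots -/

/-- For an isotropic root `α` and a root `β` not orthogonal to it, one of `β ± α` is a root. -/
theorem IsGRRS.iso_step {B : LinearMap.BilinForm K V} {R : Set V} (hR : IsGRRS B R) {α β : V}
    (hα : α ∈ R) (hβ : β ∈ R) (h0 : B α α = 0) (h : B α β ≠ 0) :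
    ∃ u : ℤ, (u = 1 ∨ u = -1) ∧ β + (u : K) • α ∈ R := by
  obtain ⟨r, hr, -, h2⟩ := hR.reflect_iso α hα h0
  have hm := hr.mapsTo hβ
  rcases h2 β hβ h with e | e <;> rw [e] at hm
  · exact ⟨1, Or.inl rfl, by simpa using hm⟩
  · exact ⟨-1, Or.inr rfl, by simpa [sub_eq_add_neg] using hm⟩

/-- Two distinct real roots of the same norm cannot have pairing at least `2`: the rotations
generated by their reflections would produce infinitely many roots. -/
theorem IsGRRS.eq_of_two_le {B : LinearMap.BilinForm K V} {R : Set V} (hR : IsGRRS B R)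
    (hB : ∀ x y : V, B x y = B y x) {x y : V} (hx : x ∈ R) (hy : y ∈ R) {c : K} (hc : c ≠ 0)
    (hxx : B x x = c) (hyy : B y y = c) {k : ℤ} (hk : 2 * B x y = (k : K) * c) (h2 : 2 ≤ k) :
    k = 2 ∧ x = y := by
  classical
  -- The orbit `x, y, k y - x, …`, stored as pairs of consecutive members.
  let f : V × V → V × V := fun p => (p.2, (k : K) • p.2 - p.1)
  let v : ℕ → V × V := fun j => f^[j] (x, y)
  have hv : ∀ j, v (j + 1) = f (v j) := fun j => Function.iterate_succ_apply' f j _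
  have inv : ∀ j, (v j).1 ∈ R ∧ (v j).2 ∈ R ∧ B (v j).1 (v j).1 = c ∧ B (v j).2 (v j).2 = c ∧
      2 * B (v j).1 (v j).2 = (k : K) * c := by
    intro j
    induction j with
    | zero => exact ⟨hx, hy, hxx, hyy, hk⟩
    | succ j ih =>
      obtain ⟨h1, h2, h3, h4, h5⟩ := ih
      rw [hv]
      generalize v j = p at *
      obtain ⟨a, b⟩ := p
      simp only [f] at *
      obtain ⟨n, hn, hn'⟩ := hR.reflect_real b h2 (by rw [h4]; exact hc) a h1
      have hnk : (n : K) = k := by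
        apply mul_right_cancel₀ hc
        rw [← h5, hB a b, hn, h4]
      rw [hnk] at hn'
      refine ⟨h2, ?_, h4, ?_, ?_⟩
      · have := hR.neg_mem _ hn'
        rwa [neg_sub] at this
      · simp only [map_sub, map_smul, LinearMap.sub_apply, LinearMap.smul_apply, smul_eq_mul]
        linear_combination (k : K) ^ 2 * h4 - (k : K) * h5 + h3 + (k : K) * hB a b
      · simp only [map_sub, map_smul, smul_eq_mul]
        linear_combination 2 * (k : K) * h4 - h5 + 2 * hB a b
  have noinj : ¬ Function.Injective (fun j => (v j).1) := fun hi =>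
    hR.finite.not_infinite (Set.infinite_of_injective_forall_mem hi (fun j => (inv j).1))
  -- Pairings of `x` with the orbit: they increase strictly once `k ≥ 3`.
  have pair : 3 ≤ k → ∀ j, ∃ p q : ℤ, 2 * B x (v j).1 = (p : K) * c ∧
      2 * B x (v j).2 = (q : K) * c ∧ p < q ∧ (j : ℤ) < q := by
    intro h3 j
    induction j with
    | zero => exact ⟨2, k, by simp [v, hxx], hk, by omega, by push_cast; omega⟩
    | succ j ih =>
      obtain ⟨p, q, hp, hq, hpq, hj⟩ := ih
      refine ⟨q, k * q - p, ?_, ?_, ?_, ?_⟩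
      · rw [hv]; exact hq
      · rw [hv]
        simp only [f, map_sub, map_smul, smul_eq_mul]
        push_cast
        linear_combination (k : K) * hq - hp
      · nlinarith
      · push_cast; nlinarith
  have hk2 : k = 2 := by
    by_contra hne
    have h3 : 3 ≤ k := by omega
    apply noinj
    choose p q hp hq hlt hj using pair h3
    have hpm : StrictMono p := by
      apply strictMono_nat_of_lt_succ
      intro j
      have : p (j + 1) = q j := by
        have h1 := hp (j + 1)
        rw [hv] at h1
        have h2 := (hq j).symm.trans h1
        exact_mod_cast (mul_right_cancel₀ hc h2).symm
      rw [this]; exact hlt j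
    intro i j hij
    apply hpm.injective
    have : ((p i : ℤ) : K) * c = (p j : K) * c := by
      rw [← hp i, ← hp j]; simp only at hij; rw [hij]
    exact_mod_cast mul_right_cancel₀ hc this
  refine ⟨hk2, ?_⟩
  by_contra hne
  have form : ∀ j : ℕ, v j = (x + (j : K) • (y - x), x + ((j : K) + 1) • (y - x)) := by
    intro j
    induction j with
    | zero => simp [v]
    | succ j ih =>
      rw [hv, ih]
      simp only [f, hk2, Prod.mk.injEq]
      push_cast
      exact ⟨rfl, by module⟩
  apply noinj
  intro i j hij
  simp only [form] at hij
  have h1 : ((i : K) - j) • (y - x) = 0 := by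
    rw [sub_smul, sub_eq_zero]; exact add_left_cancel hij
  rcases smul_eq_zero.1 h1 with h | h
  · exact_mod_cast sub_eq_zero.1 h
  · exact absurd (sub_eq_zero.1 h).symm hne

theorem IsGRRS.abs_le_two {B : LinearMap.BilinForm K V} {R : Set V} (hR : IsGRRS B R)
    (hB : ∀ x y : V, B x y = B y x) {x y : V} (hx : x ∈ R) (hy : y ∈ R) {c : K} (hc : c ≠ 0)
    (hxx : B x x = c) (hyy : B y y = c) {k : ℤ} (hk : 2 * B x y = (k : K) * c) :
    -2 ≤ k ∧ k ≤ 2 := by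
  constructor
  · by_contra h
    have := hR.eq_of_two_le hB hx (hR.neg_mem y hy) hc hxx (by simpa using hyy)
      (k := -k) (by push_cast; rw [map_neg]; linear_combination -hk) (by omega)
    omega
  · by_contra h
    have := hR.eq_of_two_le hB hx hy hc hxx hyy hk (by omega)
    omega

/-- An isotropic root `α` and a real root `γ` not orthogonal to it have pairing `n ∈ {±1, ±2}`, and
`γ - α` or `γ + α` is a root according as `n` is positive or negative. Its norm is `0` if
`n = ±1` and `-(γ, γ)` if `n = ±2`. -/
theorem IsGRRS.iso_pairing {B : LinearMap.BilinForm K V} {R : Set V} (hR : IsGRRS B R)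
    (hB : ∀ x y : V, B x y = B y x) {α γ : V} (hα : α ∈ R) (hγ : γ ∈ R) (h0 : B α α = 0)
    (hc : B γ γ ≠ 0) (h : B α γ ≠ 0) {n : ℤ} (hn : 2 * B γ α = (n : K) * B γ γ) :
    ∃ u : ℤ, (u = 1 ∨ u = -1) ∧ γ + (u : K) • α ∈ R ∧ (u * n = -1 ∨ u * n = -2) := by
  obtain ⟨u, hu, hm⟩ := hR.iso_step hα hγ h0 h
  refine ⟨u, hu, hm, ?_⟩
  have hnorm : B (γ + (u : K) • α) (γ + (u : K) • α) = (1 + u * n : K) * B γ γ := by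
    simp only [map_add, map_smul, LinearMap.add_apply, LinearMap.smul_apply, smul_eq_mul]
    linear_combination (u : K) * hn + (u : K) ^ 2 * h0 + (u : K) * hB α γ
  by_cases h1 : u * n = -1
  · exact Or.inl h1
  right
  have hunit : (1 + u * n : K) ≠ 0 := by
    have : (1 + u * n : ℤ) ≠ 0 := by omega
    exact_mod_cast this
  obtain ⟨p, hp, -⟩ := hR.reflect_real _ hm (by rw [hnorm]; exact mul_ne_zero hunit hc) γ hγ
  -- Integrality of `(2 + u n) / (1 + u n)` forces `1 + u n` to be a unit.
  have hp' : (2 + u * n : K) = p * (1 + u * n) := by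
    apply mul_right_cancel₀ hc
    rw [hnorm] at hp
    simp only [map_add, map_smul, LinearMap.add_apply, LinearMap.smul_apply, smul_eq_mul] at hp
    linear_combination hp - (u : K) * hn + 2 * (u : K) * hB γ α
  have hp2 : 2 + u * n = p * (1 + u * n) := by exact_mod_cast hp'
  have hun : (1 + u * n) * (p - 1) = 1 := by linear_combination -hp2
  have hn0 : n ≠ 0 := by
    rintro rfl
    apply h
    rw [hB]
    simpa using hn
  have : u * n ≠ 0 := mul_ne_zero (by omega) hn0
  rcases Int.eq_one_or_neg_one_of_mul_eq_one hun with h | h <;> omega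

/-! ### Roots fixed because of their position -/

/-- If real roots `x`, `y` of opposite norms are displaced by the same vector up to sign, then `x`
is fixed: the pairings `k` of `x`, `θ x` and `l` of `y`, `θ y` satisfy `k + l = 4`, so both
equal `2`. -/
theorem IsGRRS.fixed_of_opposite {B : LinearMap.BilinForm K V} {R : Set V} (hR : IsGRRS B R)
    (hB : ∀ x y : V, B x y = B y x) {θ : V ≃ₗ[K] V} (hθB : ∀ x y : V, B (θ x) (θ y) = B x y)
    (hθR : θ '' R = R) {x y : V} (hx : x ∈ R) (hy : y ∈ R) (hc : B x x ≠ 0)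
    (hyx : B y y = - B x x) {t : K} (ht : t * t = 1) (h : θ x - x = t • (θ y - y)) :
    θ x = x := by
  have hθx : θ x ∈ R := hθR ▸ Set.mem_image_of_mem θ hx
  have hθy : θ y ∈ R := hθR ▸ Set.mem_image_of_mem θ hy
  have hc' : B y y ≠ 0 := by rw [hyx]; exact neg_ne_zero.2 hc
  obtain ⟨k, hk, -⟩ := hR.reflect_real x hx hc _ hθx
  obtain ⟨l, hl, -⟩ := hR.reflect_real y hy hc' _ hθy
  have e1 : B (θ x - x) (θ x - x) = (2 - k) * B x x := by
    simp only [map_sub, LinearMap.sub_apply]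
    linear_combination hθB x x - hk - hB (θ x) x
  have e2 : B (θ y - y) (θ y - y) = (2 - l) * B y y := by
    simp only [map_sub, LinearMap.sub_apply]
    linear_combination hθB y y - hl - hB (θ y) y
  have e3 : B (θ x - x) (θ x - x) = B (θ y - y) (θ y - y) := by
    rw [h]
    simp only [map_smul, LinearMap.smul_apply, smul_eq_mul]
    linear_combination B (θ y - y) (θ y - y) * ht
  have hkl : (k + l : K) = 4 := by
    apply mul_right_cancel₀ hc
    linear_combination e1 - e3 - e2 - (2 - l) * hyx
  have hkl' : k + l = 4 := by exact_mod_cast hkl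
  have b1 := hR.abs_le_two hB hx hθx hc rfl (hθB x x) hk
  have b2 := hR.abs_le_two hB hy hθy hc' rfl (hθB y y) hl
  exact (hR.eq_of_two_le hB hx hθx hc rfl (hθB x x) hk (by omega)).2.symm

/-- For orthogonal isotropic roots `α`, `β` with nonzero pairings `n`, `m` with a real root `γ`, the
reflection of `α` in `γ` is an isotropic root not orthogonal to `β`, so it can be added to or
subtracted from `β`. Integrality for the resulting real root gives `m ∣ n`. -/
theorem IsGRRS.iso_ratio {B : LinearMap.BilinForm K V} {R : Set V} (hR : IsGRRS B R)
    (hB : ∀ x y : V, B x y = B y x) {α β γ : V} (hα : α ∈ R) (hβ : β ∈ R) (hγ : γ ∈ R)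
    (hα0 : B α α = 0) (hβ0 : B β β = 0) (hαβ : B α β = 0) (hc : B γ γ ≠ 0)
    {n m : ℤ} (hn0 : n ≠ 0) (hm0 : m ≠ 0)
    (hn : 2 * B γ α = (n : K) * B γ γ) (hm : 2 * B γ β = (m : K) * B γ γ) :
    ∃ u j : ℤ, (u = 1 ∨ u = -1) ∧ n = j * m ∧ β + (u : K) • (α - (n : K) • γ) ∈ R ∧
      B (β + (u : K) • (α - (n : K) • γ)) (β + (u : K) • (α - (n : K) • γ))
        = -(u * n * m : K) * B γ γ := by
  have hnK : (n : K) ≠ 0 := by exact_mod_cast hn0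
  have hmK : (m : K) ≠ 0 := by exact_mod_cast hm0
  obtain ⟨n', hn', hρ⟩ := hR.reflect_real γ hγ hc α hα
  have : (n' : K) = n := mul_right_cancel₀ hc (by rw [← hn', hn])
  rw [this] at hρ
  have hρ0 : B (α - (n : K) • γ) (α - (n : K) • γ) = 0 := by
    simp only [map_sub, map_smul, LinearMap.sub_apply, LinearMap.smul_apply, smul_eq_mul]
    linear_combination hα0 - (n : K) * hB α γ - (n : K) * hn
  have hρβ : 2 * B (α - (n : K) • γ) β = -(n * m : K) * B γ γ := by
    simp only [map_sub, map_smul, LinearMap.sub_apply, LinearMap.smul_apply, smul_eq_mul]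
    linear_combination 2 * hαβ - (n : K) * hm
  have hρβ0 : B (α - (n : K) • γ) β ≠ 0 := by
    intro h
    rw [h, mul_zero] at hρβ
    exact mul_ne_zero (neg_ne_zero.2 (mul_ne_zero hnK hmK)) hc hρβ.symm
  obtain ⟨u, hu, hσ⟩ := hR.iso_step hρ hβ hρ0 hρβ0
  have huK : (u : K) ≠ 0 := by
    have : u ≠ 0 := by omega
    exact_mod_cast this
  have hnorm : B (β + (u : K) • (α - (n : K) • γ)) (β + (u : K) • (α - (n : K) • γ))
      = -(u * n * m : K) * B γ γ := by
    generalize α - (n : K) • γ = ρ at *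
    simp only [map_add, map_smul, LinearMap.add_apply, LinearMap.smul_apply, smul_eq_mul]
    linear_combination hβ0 + (u : K) * hρβ + (u : K) * hB β ρ + (u : K) ^ 2 * hρ0
  have hs0 : -(u * n * m : K) ≠ 0 := neg_ne_zero.2 (mul_ne_zero (mul_ne_zero huK hnK) hmK)
  obtain ⟨j, hj, -⟩ := hR.reflect_real _ hσ (by rw [hnorm]; exact mul_ne_zero hs0 hc) α hα
  refine ⟨u, j, hu, ?_, hσ, hnorm⟩
  have : (n : K) = j * m := by
    rw [hnorm] at hj
    apply mul_right_cancel₀ (mul_ne_zero (mul_ne_zero huK hnK) hc)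
    simp only [map_add, map_sub, map_smul, LinearMap.add_apply, LinearMap.sub_apply,
      LinearMap.smul_apply, smul_eq_mul] at hj
    linear_combination -hj + 2 * hB β α + 2 * hαβ + 2 * (u : K) * hα0 - (u * n : K) * hn
  exact_mod_cast this

/-- A real root `γ` that is not orthogonal to either of two orthogonal, nonproportional isotropic
roots `α`, `β` splits off one of `β ± α` with a root of the opposite norm as remainder. Here `n`
and `m` are the pairings of `γ` with `α` and `β`; both turn out to be `±1`. -/
theorem IsGRRS.iso_complement {B : LinearMap.BilinForm K V} {R : Set V} (hR : IsGRRS B R)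
    (hB : ∀ x y : V, B x y = B y x) {α β γ : V} (hα : α ∈ R) (hβ : β ∈ R) (hγ : γ ∈ R)
    (hα0 : B α α = 0) (hβ0 : B β β = 0) (hαβ : B α β = 0) (hc : B γ γ ≠ 0)
    (hne : β ≠ α) (hne' : β ≠ -α) (hαγ : B α γ ≠ 0) (hβγ : B β γ ≠ 0) :
    ∃ n m : ℤ, m * m = 1 ∧ β + (m * n : K) • α - (m : K) • γ ∈ R ∧
      B (β + (m * n : K) • α - (m : K) • γ) (β + (m * n : K) • α - (m : K) • γ) = - B γ γ := by
  obtain ⟨n, hn, -⟩ := hR.reflect_real γ hγ hc α hα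
  obtain ⟨m, hm, -⟩ := hR.reflect_real γ hγ hc β hβ
  have hn0 : n ≠ 0 := by
    rintro rfl
    exact hαγ (by rw [hB]; simpa using hn)
  have hm0 : m ≠ 0 := by
    rintro rfl
    exact hβγ (by rw [hB]; simpa using hm)
  obtain ⟨u, j, hu, hj, hσ, hσσ⟩ :=
    hR.iso_ratio hB hα hβ hγ hα0 hβ0 hαβ hc hn0 hm0 hn hm
  obtain ⟨-, i, -, hi, -, -⟩ :=
    hR.iso_ratio hB hβ hα hγ hβ0 hα0 (by rw [hB, hαβ]) hc hm0 hn0 hm hn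
  obtain ⟨v, hv, hvR, hvn⟩ := hR.iso_pairing hB hα hγ hα0 hc hαγ hn
  obtain ⟨w, hw, hwR, hwm⟩ := hR.iso_pairing hB hβ hγ hβ0 hc hβγ hm
  have hij : j * i = 1 := by
    have : n * (j * i) = n * 1 := by
      calc n * (j * i) = j * (i * n) := by ring
        _ = n * 1 := by rw [← hi, ← hj, mul_one]
    exact mul_left_cancel₀ hn0 this
  have hj1 := Int.eq_one_or_neg_one_of_mul_eq_one hij
  have hvv : v * v = 1 := by rcases hv with rfl | rfl <;> rfl
  have hww : w * w = 1 := by rcases hw with rfl | rfl <;> rfl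
  have huu : u * u = 1 := by rcases hu with rfl | rfl <;> rfl
  have hjj : j * j = 1 := by rcases hj1 with rfl | rfl <;> rfl
  by_cases hn2 : v * n = -2
  · -- Pairing `±2`: `γ + v α` and `γ + w β` have equal norm and pairing `2`, so `β = ±α`.
    exfalso
    have hwm2 : w * m = -2 := by
      rcases hwm with h | h
      · exfalso
        rcases hv with rfl | rfl <;> rcases hw with rfl | rfl <;> rcases hj1 with rfl | rfl <;>
          omega
      · exact h
    have k1 : (v : K) * n = -2 := by exact_mod_cast hn2
    have k2 : (w : K) * m = -2 := by exact_mod_cast hwm2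
    have E := hR.eq_of_two_le hB hvR hwR (c := -B γ γ) (neg_ne_zero.2 hc) (k := 2)
      (by
        simp only [map_add, map_smul, LinearMap.add_apply, LinearMap.smul_apply, smul_eq_mul]
        linear_combination (v : K) * hn + (v : K) ^ 2 * hα0 + (v : K) * hB α γ + B γ γ * k1)
      (by
        simp only [map_add, map_smul, LinearMap.add_apply, LinearMap.smul_apply, smul_eq_mul]
        linear_combination (w : K) * hm + (w : K) ^ 2 * hβ0 + (w : K) * hB β γ + B γ γ * k2)
      (by
        simp only [map_add, map_smul, LinearMap.add_apply, LinearMap.smul_apply, smul_eq_mul]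
        push_cast
        linear_combination (v : K) * hn + (w : K) * hm + 2 * (v : K) * hB α γ
          + 2 * (v * w : K) * hαβ + B γ γ * k1 + B γ γ * k2) le_rfl
    have E' : (v : K) • α = (w : K) • β := add_left_cancel E.2
    rcases hv with rfl | rfl <;> rcases hw with rfl | rfl <;> simp at E'
    · exact hne E'.symm
    · exact hne' (by rw [E', neg_neg])
    · exact hne' E'.symm
    · exact hne E'.symm
  have hn1 : v * n = -1 := by omega
  have hnn : n * n = 1 := by
    calc n * n = (v * n) * (v * n) := by linear_combination -(n * n) * hvv
      _ = 1 := by rw [hn1]; rfl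
  have hmm : m * m = 1 := by
    calc m * m = (j * m) * (j * m) := by linear_combination -(m * m) * hjj
      _ = 1 := by rw [← hj, hnn]
  have hnnK : (n : K) * n = 1 := by exact_mod_cast hnn
  have hmmK : (m : K) * m = 1 := by exact_mod_cast hmm
  have huuK : (u : K) * u = 1 := by exact_mod_cast huu
  have hu' : u = m * n ∨ u = -(m * n) := by
    rw [← sub_eq_zero, ← sub_eq_zero (b := -(m * n)), ← mul_eq_zero]
    linear_combination huu - m * m * hnn - hmm
  rcases hu' with e | e
  · have eK : (u : K) = m * n := by exact_mod_cast e
    have hσe : β + (u : K) • (α - (n : K) • γ) = β + (m * n : K) • α - (m : K) • γ := by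
      rw [eK, smul_sub, smul_smul, mul_assoc, hnnK, mul_one]
      abel
    rw [hσe] at hσ hσσ
    refine ⟨n, m, hmm, hσ, ?_⟩
    rw [hσσ, eK]
    linear_combination -B γ γ * (m * m : K) * hnnK - B γ γ * hmmK
  · -- The other sign makes the new root equal to `m γ`, so `β = ±α`.
    exfalso
    have eK : (u : K) = -(m * n) := by exact_mod_cast e
    have hmγ : (m : K) • γ ∈ R := by
      rcases Int.eq_one_or_neg_one_of_mul_eq_one hmm with rfl | rfl
      · simpa using hγ
      · simpa using hR.neg_mem γ hγ
    have E := hR.eq_of_two_le hB hσ hmγ (c := B γ γ) hc (k := 2)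
      (by rw [hσσ, eK]; linear_combination B γ γ * (m * m : K) * hnnK + B γ γ * hmmK)
      (by
        simp only [map_smul, LinearMap.smul_apply, smul_eq_mul]
        linear_combination B γ γ * hmmK)
      (by
        simp only [map_add, map_sub, map_smul, LinearMap.add_apply, LinearMap.sub_apply,
          LinearMap.smul_apply, smul_eq_mul]
        push_cast
        rw [eK]
        linear_combination (m : K) * hm + 2 * (m : K) * hB β γ - (m * m * n : K) * hn
          - 2 * (m * m * n : K) * hB α γ + B γ γ * hmmK + B γ γ * (m * m : K) * hnnK
          + B γ γ * hmmK)
      le_rfl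
    have E2 : β + (u : K) • α = 0 := by
      have h1 := E.2
      rw [smul_sub, smul_smul, eK] at h1
      have h2 : (-(m * n : K)) * n = -m := by linear_combination -(m : K) * hnnK
      rw [h2] at h1
      rw [eK]
      have h3 : β + (-(m * n : K)) • α = (β + ((-(m * n : K)) • α - (-m : K) • γ)) - (m : K) • γ := by
        module
      rw [h3, h1, sub_self]
    rcases hu with rfl | rfl
    · exact hne' (eq_neg_of_add_eq_zero_left (by simpa using E2))
    · exact hne (by simpa [← sub_eq_add_neg, sub_eq_zero] using E2)

/-! ### Common neighbours -/

/-- The reflection in `x` moves a root `y` not orthogonal to `x` by a nonzero multiple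
of `x`. -/
theorem IsGRRS.exists_shift {B : LinearMap.BilinForm K V} {R : Set V} (hR : IsGRRS B R)
    {x y : V} (hx : x ∈ R) (hy : y ∈ R) (h : B x y ≠ 0) :
    ∃ t : K, t ≠ 0 ∧ y + t • x ∈ R := by
  by_cases h0 : B x x = 0
  · obtain ⟨u, hu, hm⟩ := hR.iso_step hx hy h0 h
    refine ⟨u, ?_, hm⟩
    have : u ≠ 0 := by omega
    exact_mod_cast this
  · obtain ⟨n, hn, hm⟩ := hR.reflect_real x hx h0 y hy
    refine ⟨-n, ?_, by rwa [neg_smul, ← sub_eq_add_neg]⟩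
    rw [neg_ne_zero]
    intro hn0
    rw [hn0, zero_mul] at hn
    exact h (by simpa using hn)

/-- In an irreducible GRRS two roots are at distance at most two for non-orthogonality: a path
`α, x, y, z` shortens to `α, y + t x, z`. -/
theorem IsGRRS.common_neighbour {B : LinearMap.BilinForm K V} {R : Set V} (hR : IsGRRS B R)
    (hB : ∀ x y : V, B x y = B y x) (hirr : GRRSIrreducible B R) {α β : V}
    (hα : α ∈ R) (hβ : β ∈ R) :
    B α β ≠ 0 ∨ ∃ γ ∈ R, B α γ ≠ 0 ∧ B γ β ≠ 0 := by
  let C : Set V := {z ∈ R | B α z ≠ 0 ∨ ∃ γ ∈ R, B α γ ≠ 0 ∧ B γ z ≠ 0}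
  have hαC : α ∈ C := by
    refine ⟨hα, Or.inr ?_⟩
    by_contra hno
    push Not at hno
    apply hR.form_ne α hα
    apply LinearMap.ext_on hR.spans
    intro γ hγ
    by_contra hγ0
    exact hγ0 (by rw [hB]; exact (hB α γ ▸ hno γ hγ hγ0))
  have closed : ∀ y ∈ C, ∀ z ∈ R, B y z ≠ 0 → z ∈ C := by
    rintro y ⟨hy, hyC⟩ z hz hyz
    by_cases hαz : B α z = 0
    swap
    · exact ⟨hz, Or.inl hαz⟩
    refine ⟨hz, Or.inr ?_⟩
    by_cases hαy : B α y = 0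
    swap
    · exact ⟨y, hy, hαy, hyz⟩
    obtain ⟨x, hx, hαx, hxy⟩ := hyC.resolve_left (fun h => h hαy)
    by_cases hxz : B x z = 0
    swap
    · exact ⟨x, hx, hαx, hxz⟩
    obtain ⟨t, ht, hm⟩ := hR.exists_shift hx hy hxy
    refine ⟨_, hm, ?_, ?_⟩
    · simp [hαy, ht, hαx]
    · simpa [hxz] using hyz
  by_contra hno
  apply hirr
  refine ⟨C, R \ C, ⟨α, hαC⟩, ⟨β, hβ, fun h => hno h.2⟩, ?_, Set.disjoint_sdiff_right, ?_⟩
  · exact Set.union_sdiff_cancel (fun z hz => hz.1)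
  · intro y hy z hz
    by_contra h
    exact hz.2 (closed y hy z hz.1 h)

/-! ### Isotropic fixed roots orthogonal to all fixed roots -/

/-- Two orthogonal, nonproportional fixed isotropic roots: every real root meeting both is fixed,
and such a root exists. -/
theorem IsGRRS.fixed_of_iso {B : LinearMap.BilinForm K V} {R : Set V} (hR : IsGRRS B R)
    (hB : ∀ x y : V, B x y = B y x) (hirr : GRRSIrreducible B R) {θ : V ≃ₗ[K] V}
    (hθB : ∀ x y : V, B (θ x) (θ y) = B x y) (hθR : θ '' R = R) {α β : V}
    (hα : α ∈ R) (hβ : β ∈ R) (hθα : θ α = α) (hθβ : θ β = β)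
    (hα0 : B α α = 0) (hβ0 : B β β = 0) (hαβ : B α β = 0) (hne : β ≠ α) (hne' : β ≠ -α) :
    ∃ γ ∈ R, θ γ = γ ∧ B α γ ≠ 0 := by
  have hex : ∃ γ ∈ R, B γ γ ≠ 0 ∧ B α γ ≠ 0 ∧ B β γ ≠ 0 := by
    obtain ⟨γ, hγ, h1, h2⟩ :=
      (hR.common_neighbour hB hirr hα hβ).resolve_left (fun h => h hαβ)
    rw [hB] at h2
    by_cases hγ0 : B γ γ = 0
    swap
    · exact ⟨γ, hγ, hγ0, h1, h2⟩
    obtain ⟨t, ht, hm⟩ := hR.exists_shift hα hγ h1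
    refine ⟨_, hm, ?_, ?_, ?_⟩
    · have : B (γ + t • α) (γ + t • α) = 2 * t * B α γ := by
        simp only [map_add, map_smul, LinearMap.add_apply, LinearMap.smul_apply, smul_eq_mul]
        linear_combination hγ0 + t ^ 2 * hα0 + t * hB γ α
      rw [this]
      exact mul_ne_zero (mul_ne_zero two_ne_zero ht) h1
    · simpa [hα0] using h1
    · simpa [hB β α, hαβ] using h2
  obtain ⟨γ, hγ, hc, h1, h2⟩ := hex
  obtain ⟨n, m, hmm, hδ, hδδ⟩ :=
    hR.iso_complement hB hα hβ hγ hα0 hβ0 hαβ hc hne hne' h1 h2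
  have hmmK : (m : K) * m = 1 := by exact_mod_cast hmm
  refine ⟨γ, hγ, ?_, h1⟩
  apply hR.fixed_of_opposite hB hθB hθR hγ hδ hc hδδ (t := -m) (by rw [neg_mul_neg, hmmK])
  simp only [map_sub, map_add, map_smul, hθα, hθβ]
  have : θ γ - γ = (m * m : K) • (θ γ - γ) := by rw [hmmK, one_smul]
  rw [this]
  module

/-- A fixed isotropic root `α` orthogonal to a fixed real root `β` with `2β` a root: some fixed
root is not orthogonal to `α`. In coordinates of type `B(m|n)`, `α = ε₁ - δ₁`, `β = δ₂`, and the
fixed root is `±ε₁`. -/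
theorem IsGRRS.fixed_of_double {B : LinearMap.BilinForm K V} {R : Set V} (hR : IsGRRS B R)
    (hB : ∀ x y : V, B x y = B y x) (hirr : GRRSIrreducible B R) {θ : V ≃ₗ[K] V}
    (hθB : ∀ x y : V, B (θ x) (θ y) = B x y) (hθR : θ '' R = R) {α β : V}
    (hα : α ∈ R) (hβ : β ∈ R) (hθα : θ α = α)
    (hα0 : B α α = 0) (hd : B β β ≠ 0) (h2β : (2 : K) • β ∈ R) (hαβ : B α β = 0) :
    ∃ γ ∈ R, θ γ = γ ∧ B α γ ≠ 0 := by
  -- An isotropic common neighbour: reflect `α` in a real one.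
  have hex : ∃ γ ∈ R, B γ γ = 0 ∧ B γ α ≠ 0 ∧ B γ β ≠ 0 := by
    obtain ⟨γ, hγ, h1, h2⟩ :=
      (hR.common_neighbour hB hirr hα hβ).resolve_left (fun h => h hαβ)
    by_cases hγ0 : B γ γ = 0
    · exact ⟨γ, hγ, hγ0, by rwa [hB], h2⟩
    obtain ⟨n, hn, hm⟩ := hR.reflect_real γ hγ hγ0 α hα
    have hn0 : (n : K) ≠ 0 := by
      intro hn0
      rw [hn0, zero_mul, hB] at hn
      exact h1 (by simpa using hn)
    refine ⟨_, hm, ?_, ?_, ?_⟩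
    · simp only [map_sub, map_smul, LinearMap.sub_apply, LinearMap.smul_apply, smul_eq_mul]
      linear_combination hα0 - (n : K) * hB α γ - (n : K) * hn
    · simp [hα0, hB γ α, h1, hn0]
    · simp [hαβ, h2, hn0]
  obtain ⟨γ, hγ, hγ0, hγα, hγβ⟩ := hex
  obtain ⟨k, hk, -⟩ := hR.reflect_real β hβ hd γ hγ
  obtain ⟨u, hu, hδ, huk⟩ := hR.iso_pairing hB hγ hβ hγ0 hd hγβ hk
  -- Integrality of the pairing with `2β` makes `k` even.
  have huk2 : u * k = -2 := by
    have hne : B ((2 : K) • β) ((2 : K) • β) ≠ 0 := by simpa using hd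
    obtain ⟨p, hp, -⟩ := hR.reflect_real _ h2β hne γ hγ
    simp only [map_smul, LinearMap.smul_apply, smul_eq_mul] at hp
    have : (k : K) = p * 2 := by
      apply mul_right_cancel₀ (mul_ne_zero two_ne_zero hd)
      linear_combination hp - 2 * hk
    have : k = p * 2 := by exact_mod_cast this
    rcases hu with rfl | rfl <;> omega
  have hukK : (u : K) * k = -2 := by exact_mod_cast huk2
  have huuK : (u : K) * u = 1 := by rcases hu with rfl | rfl <;> simp
  have huK : (u : K) ≠ 0 := fun h => by simp [h] at huuK
  have hδδ : B (β + (u : K) • γ) (β + (u : K) • γ) = -B β β := by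
    simp only [map_add, map_smul, LinearMap.add_apply, LinearMap.smul_apply, smul_eq_mul]
    linear_combination (u : K) * hk + (u : K) ^ 2 * hγ0 + (u : K) * hB γ β + B β β * hukK
  have hδ0 : B (β + (u : K) • γ) (β + (u : K) • γ) ≠ 0 := by rw [hδδ]; exact neg_ne_zero.2 hd
  have hαδ : B α (β + (u : K) • γ) ≠ 0 := by
    simp [hαβ, huK, hB α γ, hγα]
  obtain ⟨n, hn, -⟩ := hR.reflect_real _ hδ hδ0 α hα
  obtain ⟨v, hv, hη, hvn⟩ := hR.iso_pairing hB hα hδ hα0 hδ0 hαδ hn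
  by_cases hvn2 : v * n = -2
  · have hvnK : (v : K) * n = -2 := by exact_mod_cast hvn2
    refine ⟨_, hδ, ?_, hαδ⟩
    apply hR.fixed_of_opposite hB hθB hθR hδ hη hδ0 (t := 1) ?_ (one_mul 1)
    · rw [map_add θ (β + (u : K) • γ), map_smul θ (v : K) α, hθα, one_smul]
      abel
    · generalize β + (u : K) • γ = δ at *
      simp only [map_add, map_smul, LinearMap.add_apply, LinearMap.smul_apply, smul_eq_mul]
      linear_combination (v : K) * hn + (v : K) ^ 2 * hα0 + (v : K) * hB α δ + B δ δ * hvnK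
  -- Pairing `±1` is impossible: one of `α ± γ` is a root `ν` of norm `±(β, β)`, too close to `β`.
  exfalso
  have hvn1 : v * n = -1 := by omega
  have hn1 : n = 1 ∨ n = -1 := by rcases hv with rfl | rfl <;> omega
  obtain ⟨w, hw, hν⟩ := hR.iso_step hγ hα hγ0 hγα
  have hwwK : (w : K) * w = 1 := by rcases hw with rfl | rfl <;> simp
  have hγα' : 2 * (u : K) * B γ α = -(n : K) * B β β := by
    rw [hδδ] at hn
    simp only [map_add, map_smul, LinearMap.add_apply, LinearMap.smul_apply, smul_eq_mul] at hn
    linear_combination hn - 2 * hαβ - 2 * hB β α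
  have hβγ : B β γ = -(u : K) * B β β := by
    apply mul_left_cancel₀ (two_ne_zero (α := K))
    linear_combination hk + (u : K) * B β β * hukK - (k : K) * B β β * huuK
  have hνν : B (α + (w : K) • γ) (α + (w : K) • γ) = -(w * u * n : K) * B β β := by
    simp only [map_add, map_smul, LinearMap.add_apply, LinearMap.smul_apply, smul_eq_mul]
    linear_combination hα0 + (w : K) ^ 2 * hγ0 + (w : K) * hB α γ + (w * u : K) * hγα'
      - 2 * (w : K) * B γ α * huuK
  have hβν : B β (α + (w : K) • γ) = -(w * u : K) * B β β := by
    simp only [map_add, map_smul, smul_eq_mul]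
    linear_combination (w : K) * hβγ + hB β α + hαβ
  have hwun : w * u * n = 1 ∨ w * u * n = -1 := by
    rcases hw with rfl | rfl <;> rcases hu with rfl | rfl <;> rcases hn1 with rfl | rfl <;> simp
  rcases hwun with e | e
  · -- Opposite norm: the reflection of `β` in `ν` has pairing `6` with `β`.
    have eK : (w : K) * u * n = 1 := by exact_mod_cast e
    have hνd : B (α + (w : K) • γ) (α + (w : K) • γ) = -B β β := by rw [hνν, eK, neg_one_mul]
    obtain ⟨q, hq, hqR⟩ :=
      hR.reflect_real _ hν (by rw [hνd]; exact neg_ne_zero.2 hd) β hβ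
    have hq' : (q : K) = 2 * (w * u) := by
      apply mul_right_cancel₀ hd
      rw [hνd, hB, hβν] at hq
      linear_combination hq
    have b := hR.abs_le_two hB hβ hqR hd rfl (k := 6)
      (by
        generalize α + (w : K) • γ = ν at *
        simp only [map_sub, map_smul, LinearMap.sub_apply, LinearMap.smul_apply, smul_eq_mul]
        linear_combination -(q : K) * hq + (q : K) * hB ν β)
      (by
        rw [map_sub, map_smul, smul_eq_mul, hβν, hq']
        push_cast
        linear_combination 4 * B β β * (u * u : K) * hwwK + 4 * B β β * huuK)
    omega
  · -- Same norm: `ν = ±β`, so `α = ±(β + u γ)` would be real.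
    have eK : (w : K) * u * n = -1 := by exact_mod_cast e
    have hνd : B (α + (w : K) • γ) (α + (w : K) • γ) = B β β := by rw [hνν, eK]; ring
    have hsR : (-(w * u) : K) • β ∈ R := by
      rcases hw with rfl | rfl <;> rcases hu with rfl | rfl <;>
        simp [hβ, hR.neg_mem β hβ]
    have E := hR.eq_of_two_le hB hsR hν hd (k := 2)
      (by
        simp only [map_smul, LinearMap.smul_apply, smul_eq_mul]
        linear_combination B β β * (u * u : K) * hwwK + B β β * huuK)
      hνd
      (by
        rw [map_smul, LinearMap.smul_apply, smul_eq_mul, hβν]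
        push_cast
        linear_combination 2 * B β β * (u * u : K) * hwwK + 2 * B β β * huuK) le_rfl
    have hαe : α = (-(w * u) : K) • (β + (u : K) • γ) := by
      have : α = (-(w * u) : K) • β - (w : K) • γ := by rw [E.2]; abel
      rw [this, smul_add, smul_smul, neg_mul, mul_assoc, huuK, mul_one, neg_smul (w : K) γ,
        sub_eq_add_neg]
    apply hαδ
    have h3 : B α α = 0 := hα0
    nth_rewrite 2 [hαe] at h3
    rw [map_smul, smul_eq_mul] at h3
    refine (mul_eq_zero.1 h3).resolve_left ?_
    intro h4
    have : (w * w : K) * (u * u) = 0 := by linear_combination -(w * u : K) * h4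
    rw [hwwK, huuK, one_mul] at this
    exact one_ne_zero this

/-- for the fixed roots `S` of an automorphism of an irreducible GRRS,
either `S = ∅`, or `S` is a GRRS in `span(S)`, or `S = T' ⊔ {α, -α}` for an isotropic
root `α ∈ S` orthogonal to `T' := S \ {α, -α}`, with every root of `T'` even and `T'`
(if nonempty) a reduced even root system in `span(T')`. -/
theorem fixed_roots_almost_grrs {K V : Type*} [Field K] [CharZero K]
    [AddCommGroup V] [Module K V] [FiniteDimensional K V]
    (B : LinearMap.BilinForm K V) (hB : ∀ x y : V, B x y = B y x)
    (R : Set V) (hR : IsGRRS B R) (hirr : GRRSIrreducible B R)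
    (θ : V ≃ₗ[K] V) (hθB : ∀ x y : V, B (θ x) (θ y) = B x y) (hθR : θ '' R = R)
    (S : Set V) (hS : S = {α ∈ R | θ α = α}) :
    S = ∅ ∨ IsGRRSIn B S ∨
      ∃ α : V, α ∈ S ∧ -α ∈ S ∧ B α α = 0 ∧
        (∀ β ∈ S \ {α, -α}, ¬ IsOddRoot B R β) ∧
        (∀ β ∈ S \ {α, -α}, B α β = 0) ∧
        ((S \ {α, -α}).Nonempty →
          IsGRRSIn B (S \ {α, -α}) ∧
          (∀ β ∈ S \ {α, -α}, ¬ IsOddRoot B (S \ {α, -α}) β) ∧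
          (∀ β ∈ S \ {α, -α}, (2 : K) • β ∉ S \ {α, -α})) := by
  subst hS
  set S : Set V := {α ∈ R | θ α = α} with hSdef
  have memS : ∀ x, x ∈ S ↔ x ∈ R ∧ θ x = x := fun x => Iff.rfl
  have hfin : S.Finite := hR.finite.subset (fun x hx => hx.1)
  have hneg : ∀ x ∈ S, -x ∈ S := fun x hx =>
    ⟨hR.neg_mem x hx.1, by rw [map_neg, hx.2]⟩
  have hreal : ∀ α ∈ S, B α α ≠ 0 → ∀ β ∈ S,
      ∃ n : ℤ, 2 * B α β = (n : K) * B α α ∧ β - (n : K) • α ∈ S := by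
    intro α hα h β hβ
    obtain ⟨n, hn, hm⟩ := hR.reflect_real α hα.1 h β hβ.1
    exact ⟨n, hn, hm, by rw [map_sub, map_smul, hα.2, hβ.2]⟩
  rcases Set.eq_empty_or_nonempty S with h | hne
  · exact Or.inl h
  right
  by_cases hform : ∀ α ∈ S, ∃ β ∈ S, B α β ≠ 0
  · left
    refine ⟨hfin, hne, fun h => hR.zero_not_mem h.1, hform, hreal, ?_, hneg⟩
    intro α hα h0
    obtain ⟨r, hr, h1, h2⟩ := hR.reflect_iso α hα.1 h0
    have hmaps : Set.MapsTo r S S := by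
      intro β hβ
      refine ⟨hr.mapsTo hβ.1, ?_⟩
      by_cases h : B α β = 0
      · rw [h1 β hβ.1 h, hβ.2]
      · rcases h2 β hβ.1 h with e | e <;> rw [e]
        · rw [map_add, hα.2, hβ.2]
        · rw [map_sub, hα.2, hβ.2]
    have hinj : Set.InjOn r S := hr.injOn.mono (fun x hx => hx.1)
    -- An injective self-map of a finite set is bijective.
    exact ⟨r, (hfin.injOn_iff_bijOn_of_mapsTo hmaps).1 hinj,
      fun β hβ => h1 β hβ.1, fun β hβ => h2 β hβ.1⟩
  right
  push Not at hform
  obtain ⟨α, hα, horth⟩ := hform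
  have hα0 : B α α = 0 := horth α hα
  have heven : ∀ β ∈ S \ {α, -α}, ¬ IsOddRoot B R β := by
    rintro β ⟨hβ, hβn⟩ hodd
    simp only [Set.mem_insert_iff, Set.mem_singleton_iff, not_or] at hβn
    have hex : ∃ γ ∈ R, θ γ = γ ∧ B α γ ≠ 0 := by
      by_cases hβ0 : B β β = 0
      · exact hR.fixed_of_iso hB hirr hθB hθR hα.1 hβ.1 hα.2 hβ.2 hα0 hβ0 (horth β hβ)
          hβn.1 hβn.2
      · exact hR.fixed_of_double hB hirr hθB hθR hα.1 hβ.1 hα.2 hα0 hβ0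
          (hodd.resolve_left hβ0) (horth β hβ)
    obtain ⟨γ, hγ, hθγ, h⟩ := hex
    exact h (horth γ ⟨hγ, hθγ⟩)
  have hrealT : ∀ β ∈ S \ {α, -α}, B β β ≠ 0 := fun β hβ h => heven β hβ (Or.inl h)
  have hdouble : ∀ β ∈ S \ {α, -α}, (2 : K) • β ∉ S \ {α, -α} := fun β hβ h =>
    heven β hβ (Or.inr h.1.1)
  refine ⟨α, hα, hneg α hα, hα0, heven, fun β hβ => horth β hβ.1, fun hTne =>
    ⟨⟨hfin.subset Set.sdiff_subset, hTne, fun h => hR.zero_not_mem h.1.1,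
      fun β hβ => ⟨β, hβ, hrealT β hβ⟩, ?_, fun β hβ h => absurd h (hrealT β hβ), ?_⟩,
      fun β hβ h => h.elim (hrealT β hβ) (hdouble β hβ), hdouble⟩⟩
  · intro β hβ hβ0 γ hγ
    obtain ⟨n, hn, hm⟩ := hreal β hβ.1 hβ0 γ hγ.1
    refine ⟨n, hn, hm, ?_⟩
    intro hmem
    -- A reflected root `±α` would be isotropic, but reflections preserve the norm of `γ`.
    have hiso : B (γ - (n : K) • β) (γ - (n : K) • β) = 0 := by
      rcases hmem with e | e
      · rw [e, hα0]
      · rw [Set.mem_singleton_iff.1 e]; simp [hα0]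
    apply hrealT γ hγ
    simp only [map_sub, map_smul, LinearMap.sub_apply, LinearMap.smul_apply, smul_eq_mul] at hiso
    linear_combination hiso + (n : K) * hB γ β + (n : K) * hn
  · rintro β ⟨hβ, hβn⟩
    refine ⟨hneg β hβ, ?_⟩
    simp only [Set.mem_insert_iff, Set.mem_singleton_iff, not_or] at hβn ⊢
    exact ⟨fun h => hβn.2 (by rw [← h, neg_neg]), fun h => hβn.1 (neg_inj.1 h)⟩

end GRRS
end

section
/- Under these hypotheses, every positive root β ∈ R⁺ with θβ = β is a linear combination with nonnegative integer coefficients of the θ-fixed simple roots I. (This is the abstract combinatorial form of the statement that, for an Iwasawa Borel subalgebra, the simple roots fixed by the involution θ generate all roots fixed by θ.) -/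
/-!
Write a fixed positive root as `β = ∑ γ ∈ Π, c γ • γ` and let `J = Π ∖ I`. Since `θ` fixes both `β`
and the `I`-part of the sum, it fixes `∑ α ∈ J, c α • α`. For `α ∈ J` the vector `θ α` is
`-∑ γ ∈ Π, d α γ • γ` with `d α γ ∈ ℕ`, so
`∑ γ ∈ J, c γ • γ + ∑ γ ∈ Π, (∑ α ∈ J, c α * d α γ) • γ = 0`. By linear independence and
characteristic zero these natural-number coefficients vanish; in particular `c = 0` on `J`.
-/

/-- in a root datum `R = R⁺ ⊔ (−R⁺)` with linearly independent simple roots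
`Π` generating `R⁺` over `ℕ`, and a linear involution `θ` preserving `R` which sends every
non-fixed simple root into `−R⁺`, every `θ`-fixed positive root is a nonnegative integral
combination of the `θ`-fixed simple roots `I`. -/
theorem fixed_positive_roots_generated_by_fixed_simples
    {K V : Type*} [Field K] [CharZero K] [AddCommGroup V] [Module K V]
    [FiniteDimensional K V]
    (R : Set V) (hfin : R.Finite) (h0 : (0 : V) ∉ R) (hRneg : -R = R)
    (Rpos : Set V) (hsub : Rpos ⊆ R)
    (hcover : R = Rpos ∪ -Rpos) (hdisj : Disjoint Rpos (-Rpos))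
    (simples : Finset V) (hssub : ↑simples ⊆ Rpos)
    (hli : LinearIndependent K (Subtype.val : ((simples : Set V)) → V))
    (hgen : ∀ β ∈ Rpos, ∃ c : V → ℕ, β = ∑ γ ∈ simples, c γ • γ)
    (θ : V →ₗ[K] V) (hinv : ∀ x, θ (θ x) = x) (hθR : θ '' R = R)
    (I : Finset V) (hI : ∀ γ, γ ∈ I ↔ γ ∈ simples ∧ θ γ = γ)
    (hneg : ∀ α ∈ simples, θ α ≠ α → θ α ∈ -Rpos) :
    ∀ β ∈ Rpos, θ β = β → ∃ c : V → ℕ, β = ∑ γ ∈ I, c γ • γ := by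
  classical
  intro β hβ hfix
  obtain ⟨c, hc⟩ := hgen β hβ
  have hd : ∀ α, ∃ d : V → ℕ, α ∈ simples → θ α ≠ α → θ α = -∑ γ ∈ simples, d γ • γ := by
    intro α
    by_cases h : α ∈ simples ∧ θ α ≠ α
    · obtain ⟨d, hd⟩ := hgen _ (hneg α h.1 h.2)
      exact ⟨d, fun _ _ => by rw [← hd, neg_neg]⟩
    · exact ⟨0, fun h1 h2 => absurd ⟨h1, h2⟩ h⟩
  choose d hd using hd
  have hIeq : I = simples.filter (fun γ => θ γ = γ) := by
    ext γ
    simp [hI]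
  set J := simples.filter (fun γ => ¬ θ γ = γ) with hJ
  have hsplit : β = ∑ γ ∈ I, c γ • γ + ∑ γ ∈ J, c γ • γ := by
    rw [hc, hIeq, hJ, Finset.sum_filter_add_sum_filter_not]
  have hθI : θ (∑ γ ∈ I, c γ • γ) = ∑ γ ∈ I, c γ • γ := by
    rw [map_sum]
    refine Finset.sum_congr rfl fun γ hγ => ?_
    rw [map_nsmul, ((hI γ).1 hγ).2]
  have hθJ : θ (∑ γ ∈ J, c γ • γ) = ∑ γ ∈ J, c γ • γ := by
    rw [hsplit, map_add, hθI] at hfix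
    exact add_left_cancel hfix
  have hθJ' : θ (∑ γ ∈ J, c γ • γ) = -∑ γ ∈ simples, (∑ α ∈ J, c α * d α γ) • γ := by
    have h1 : θ (∑ γ ∈ J, c γ • γ) = ∑ α ∈ J, -∑ γ ∈ simples, (c α * d α γ) • γ := by
      rw [map_sum]
      refine Finset.sum_congr rfl fun α hα => ?_
      obtain ⟨h1, h2⟩ := Finset.mem_filter.1 hα
      rw [map_nsmul, hd α h1 h2, smul_neg, Finset.smul_sum]
      simp only [mul_smul]
    rw [h1, Finset.sum_neg_distrib, Finset.sum_comm]
    simp only [Finset.sum_smul]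
  have hzero : ∑ γ ∈ simples,
      (((if θ γ = γ then 0 else c γ) + ∑ α ∈ J, c α * d α γ : ℕ) : K) • γ = 0 := by
    have hJs : ∑ γ ∈ J, c γ • γ = ∑ γ ∈ simples, (if θ γ = γ then 0 else c γ) • γ := by
      rw [hJ, Finset.sum_filter]
      refine Finset.sum_congr rfl fun γ _ => ?_
      split_ifs <;> simp_all
    simp only [Nat.cast_smul_eq_nsmul, add_smul _ _ (_ : V), Finset.sum_add_distrib]
    rw [← hJs, ← hθJ, hθJ', neg_add_cancel]
  have hcJ : ∀ γ ∈ J, c γ = 0 := by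
    intro γ hγ
    obtain ⟨h1, h2⟩ := Finset.mem_filter.1 hγ
    have hli' : LinearIndepOn K id (simples : Set V) := hli
    have h := linearIndepOn_finset_iff.1 hli' _ hzero γ h1
    rw [Nat.cast_eq_zero, if_neg h2] at h
    omega
  refine ⟨c, ?_⟩
  rw [hsplit, Finset.sum_eq_zero (s := J) fun γ hγ => by rw [hcJ γ hγ, zero_smul], add_zero]
end

section
/- Under these hypotheses: (i) for each α ∈ Π∖I there exist a simple root α' ∈ Π∖I and nonnegative integers d_γ (γ ∈ I) such that −θα = α' + Σ_{γ∈I} d_γ·γ; (ii) the resulting assignment α ↦ α' is a well-defined map of Π∖I to itself satisfying (α')' = α, hence a bijection of order 1 or 2; and (iii) for distinct α, β ∈ Π∖I, writing λ̄ := (λ − θλ)/2 for λ ∈ V, one has ᾱ = β̄ if and only if β = α'. -/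
/-!
Write `J` for the set of simple roots not fixed by `θ`. For `α ∈ J` the positive root `-θα` has an
expansion `∑ c α γ • γ` over the simple roots with natural coefficients. As `-θ` maps `span I` to
itself, it acts on `span simples / span I`, in the basis given by `J`, by the matrix
`(c α β)`, `α, β ∈ J`. Since `θ² = 1`, this matrix squares to the identity, and a matrix of natural
numbers with that property is the permutation matrix of an involution
(`exists_involution_of_sq_eq_one`). This involution is `α ↦ α'`. The statement about `ᾱ = β̄`
is then a comparison of coefficients on `J`, the converse being `-θα' = α + ∑_{γ ∈ I} d γ • γ`,
obtained by applying `θ` to the formula for `-θα`.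
-/

/-- A square matrix of natural numbers whose square is the identity is the permutation matrix of an
involution. If `M α β` and `M β α` are nonzero, then any other nonzero entry `M α δ` would make the
entry `(β, δ)` of the square nonzero. -/
lemma exists_involution_of_sq_eq_one {V : Type*} [DecidableEq V] (J : Finset V) (M : V → V → ℕ)
    (hM : ∀ α ∈ J, ∀ δ ∈ J, ∑ β ∈ J, M α β * M β δ = if δ = α then 1 else 0) :
    ∃ σ : V → V, ∀ α ∈ J, σ α ∈ J ∧ σ (σ α) = α ∧
      ∀ β ∈ J, M α β = if β = σ α then 1 else 0 := by
  have key : ∀ α ∈ J, ∃ β ∈ J, M α β = 1 ∧ M β α = 1 ∧ ∀ δ ∈ J, δ ≠ β → M α δ = 0 := by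
    intro α hα
    have h1 := hM α hα α hα
    rw [if_pos rfl] at h1
    obtain ⟨β, hβ, hne⟩ : ∃ β ∈ J, M α β * M β α ≠ 0 := by
      by_contra! hcon
      rw [Finset.sum_eq_zero hcon] at h1
      exact zero_ne_one h1
    have hle : M α β * M β α ≤ 1 := h1 ▸
      Finset.single_le_sum (f := fun β => M α β * M β α) (fun _ _ => Nat.zero_le _) hβ
    have hone : M α β * M β α = 1 := by omega
    obtain ⟨ha, hb⟩ := mul_eq_one.mp hone
    refine ⟨β, hβ, ha, hb, fun δ hδ hδβ => ?_⟩
    have h2 := hM β hβ δ hδ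
    rw [if_neg hδβ, Finset.sum_eq_zero_iff] at h2
    simpa [hb] using h2 α hα
  choose! σ hσ using key
  refine ⟨σ, fun α hα => ?_⟩
  obtain ⟨hJ, h1, h2, h3⟩ := hσ α hα
  refine ⟨hJ, ?_, fun β hβ => ?_⟩
  · by_contra hne
    have := (hσ (σ α) hJ).2.2.2 α hα (Ne.symm hne)
    omega
  · split_ifs with h
    · rw [h, h1]
    · exact h3 β hβ h

/-- in the setting of Statement 10, (i) for each non-fixed simple root `α`
one has `−θα = α' + Σ_{γ ∈ I} d_γ γ` for a non-fixed simple root `α'` and nonnegative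
integers `d_γ`; (ii) `α ↦ α'` is an involutive bijection of `Π ∖ I`; (iii) for distinct
non-fixed simple roots `α, β`, `ᾱ = β̄` iff `β = α'`, where `λ̄ = (λ − θλ)/2`. -/
theorem diagram_automorphism
    {K V : Type*} [Field K] [CharZero K] [AddCommGroup V] [Module K V]
    [FiniteDimensional K V]
    (R : Set V) (hfin : R.Finite) (h0 : (0 : V) ∉ R) (hRneg : -R = R)
    (Rpos : Set V) (hsub : Rpos ⊆ R)
    (hcover : R = Rpos ∪ -Rpos) (hdisj : Disjoint Rpos (-Rpos))
    (simples : Finset V) (hssub : ↑simples ⊆ Rpos)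
    (hli : LinearIndependent K (Subtype.val : ((simples : Set V)) → V))
    (hgen : ∀ β ∈ Rpos, ∃ c : V → ℕ, β = ∑ γ ∈ simples, c γ • γ)
    (θ : V →ₗ[K] V) (hinv : ∀ x, θ (θ x) = x) (hθR : θ '' R = R)
    (I : Finset V) (hI : ∀ γ, γ ∈ I ↔ γ ∈ simples ∧ θ γ = γ)
    (hneg : ∀ α ∈ simples, θ α ≠ α → θ α ∈ -Rpos) :
    ∃ σ : V → V,
      (∀ α ∈ simples, θ α ≠ α →
        σ α ∈ simples ∧ θ (σ α) ≠ σ α ∧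
        (∃ d : V → ℕ, -(θ α) = σ α + ∑ γ ∈ I, d γ • γ) ∧
        σ (σ α) = α) ∧
      (∀ α ∈ simples, θ α ≠ α → ∀ β ∈ simples, θ β ≠ β → α ≠ β →
        ((2 : K)⁻¹ • (α - θ α) = (2 : K)⁻¹ • (β - θ β) ↔ β = σ α)) := by
  classical
  -- A vector in the span of the simple roots has unique integer coefficients.
  have uniq : ∀ a b : V → ℤ, ∑ γ ∈ simples, a γ • γ = ∑ γ ∈ simples, b γ • γ →
      ∀ γ ∈ simples, a γ = b γ := by
    intro a b hab γ hγ
    have hli' : LinearIndepOn K id (simples : Set V) := hli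
    have h := linearIndepOn_finset_iff.mp hli' (fun γ => ((a γ - b γ : ℤ) : K)) (by
      simp only [id, Int.cast_smul_eq_zsmul, sub_smul, Finset.sum_sub_distrib, hab, sub_self]) γ hγ
    have h' : a γ - b γ = 0 := by exact_mod_cast h
    omega
  have hc : ∀ α, α ∈ simples → θ α ≠ α →
      ∃ c : V → ℕ, -(θ α) = ∑ γ ∈ simples, c γ • γ := fun α hα hα' =>
    hgen _ (hneg α hα hα')
  choose! c hc using hc
  let J := simples.filter fun γ => θ γ ≠ γ
  have hJ : ∀ γ, γ ∈ J ↔ γ ∈ simples ∧ θ γ ≠ γ := fun γ => Finset.mem_filter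
  have hIeq : I = simples.filter fun γ => θ γ = γ := by
    ext γ
    rw [hI, Finset.mem_filter]
  have split : ∀ f : V → V, ∑ γ ∈ simples, f γ = ∑ γ ∈ J, f γ + ∑ γ ∈ I, f γ := by
    intro f
    rw [hIeq, add_comm]
    exact (Finset.sum_filter_add_sum_filter_not simples _ f).symm
  have hfix : ∀ d : V → ℕ, θ (∑ γ ∈ I, d γ • γ) = ∑ γ ∈ I, d γ • γ := by
    intro d
    rw [map_sum]
    exact Finset.sum_congr rfl fun γ hγ => by rw [map_nsmul, ((hI γ).mp hγ).2]
  have hM : ∀ α ∈ J, ∀ δ ∈ J, ∑ β ∈ J, c α β * c β δ = if δ = α then 1 else 0 := by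
    intro α hα δ hδ
    rw [hJ] at hα hδ
    have e1 : α = ∑ β ∈ J, c α β • (-(θ β)) - ∑ γ ∈ I, c α γ • γ := by
      have h := congrArg (fun x => -(θ x)) (hc α hα.1 hα.2)
      simp only [map_neg, neg_neg, hinv] at h
      rw [split, map_add, hfix, map_sum, neg_add, ← Finset.sum_neg_distrib] at h
      rw [sub_eq_add_neg]
      simpa only [map_nsmul, smul_neg] using h
    have e2 : ∑ β ∈ J, c α β • (-(θ β))
        = ∑ δ ∈ simples, (∑ β ∈ J, (c α β : ℤ) * c β δ) • δ := by
      simp only [Finset.sum_smul]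
      rw [Finset.sum_comm]
      refine Finset.sum_congr rfl fun β hβ => ?_
      rw [hJ] at hβ
      rw [hc β hβ.1 hβ.2, Finset.smul_sum]
      refine Finset.sum_congr rfl fun γ _ => ?_
      rw [mul_smul, natCast_zsmul, natCast_zsmul]
    have e3 : ∑ γ ∈ I, c α γ • γ
        = ∑ γ ∈ simples, (if θ γ = γ then (c α γ : ℤ) else 0) • γ := by
      rw [hIeq, Finset.sum_filter]
      refine Finset.sum_congr rfl fun γ _ => ?_
      split_ifs <;> simp
    have e4 : α = ∑ γ ∈ simples, (if γ = α then (1 : ℤ) else 0) • γ := by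
      simp [ite_smul, hα.1]
    rw [e2, e3, ← Finset.sum_sub_distrib] at e1
    simp only [← sub_smul] at e1
    have := uniq _ _ (e4.symm.trans e1) δ hδ.1
    simp only [hδ.2, if_false, sub_zero] at this
    have h' : ((∑ β ∈ J, c α β * c β δ : ℕ) : ℤ) = ((if δ = α then 1 else 0 : ℕ) : ℤ) := by
      push_cast
      exact this.symm
    exact_mod_cast h'
  obtain ⟨σ, hσ⟩ := exists_involution_of_sq_eq_one J c hM
  have form : ∀ α ∈ J, -(θ α) = σ α + ∑ γ ∈ I, c α γ • γ := by
    intro α hα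
    obtain ⟨hs, -, hrow⟩ := hσ α hα
    rw [hc α ((hJ α).mp hα).1 ((hJ α).mp hα).2, split,
      Finset.sum_congr rfl fun β hβ => by rw [hrow β hβ]]
    simp [ite_smul, hs]
  refine ⟨σ, fun α hα hα' => ?_, fun α hα hα' β hβ hβ' hne => ?_⟩
  · have hαJ := (hJ α).mpr ⟨hα, hα'⟩
    obtain ⟨hs, hss, -⟩ := hσ α hαJ
    exact ⟨((hJ _).mp hs).1, ((hJ _).mp hs).2, ⟨c α, form α hαJ⟩, hss⟩
  · have hαJ := (hJ α).mpr ⟨hα, hα'⟩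
    have hβJ := (hJ β).mpr ⟨hβ, hβ'⟩
    constructor
    · intro h
      have h2 : α - θ α = β - θ β := smul_right_injective V (inv_ne_zero two_ne_zero) h
      have expand : ∀ x ∈ simples, θ x ≠ x →
          x - θ x = ∑ γ ∈ simples, ((if γ = x then (1 : ℤ) else 0) + c x γ) • γ := by
        intro x hx hx'
        simp only [add_smul, Finset.sum_add_distrib, natCast_zsmul]
        rw [← hc x hx hx', sub_eq_add_neg]
        simp [ite_smul, hx]
      rw [expand α hα hα', expand β hβ hβ'] at h2
      -- The coefficient of `β` on the right is positive, so it must come from `σ α` on the left.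
      have h3 := uniq _ _ h2 β hβ
      rw [if_neg hne.symm, if_pos rfl, (hσ α hαJ).2.2 β hβJ] at h3
      by_contra hcon
      rw [if_neg hcon] at h3
      push_cast at h3
      omega
    · rintro rfl
      congr 1
      have h1 := form α hαJ
      have h2 := congrArg θ h1
      rw [map_neg, hinv, map_add, hfix] at h2
      have h3 : θ (σ α) = -α - ∑ γ ∈ I, c α γ • γ := by rw [h2]; abel
      rw [h3, sub_eq_add_neg, h1]
      abel
end

section
/- Let R be a GRRS in V and θ an automorphism of R which is an involution (θ∘θ = id). For α ∈ R set ᾱ := (α − θα)/2, and let R̄ := {ᾱ : α ∈ R, ᾱ ≠ 0}, R̄_re := {ᾱ : α ∈ R_re, ᾱ ≠ 0}, and R̄_im := R̄ ∖ R̄_re. Then for every x ∈ R̄_im and y ∈ R̄ with y ≠ x, y ≠ −x and (x,y) ≠ 0, at least one of y + x and y − x lies in R̄. -/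
/-!
Let `x` and `y` be the restrictions of roots `α` and `β`. Since `x` is not the restriction of a
real root, `α` is isotropic. Because `θ` is an isometric involution,
`(x, y) = ((α, β) - (α, θβ)) / 2`, so `α` is not orthogonal to both `β` and `-θβ`, and these two
roots have the same restriction `y`. The reflection in the isotropic root `α` moves the one not
orthogonal to `α` to a root differing from it by `±α`; its restriction is `y ± x`, which is
nonzero because `y ≠ ∓x`.
-/

namespace GRRS

open Submodule

variable {K V : Type*} [Field K] [CharZero K] [AddCommGroup V] [Module K V]

/-- for a GRRS `R` with an involutive automorphism `θ`, writing
`x̄ = (x − θx)/2` and `R̄`, `R̄_re`, `R̄_im` for the sets of nonzero restrictions of roots,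
real roots, and the complement: if `x ∈ R̄_im`, `y ∈ R̄`, `y ≠ ±x` and `(x,y) ≠ 0`, then
`y + x ∈ R̄` or `y − x ∈ R̄`. -/
theorem restricted_roots_weak_axiom {K V : Type*} [Field K] [CharZero K]
    [AddCommGroup V] [Module K V] [FiniteDimensional K V]
    (B : LinearMap.BilinForm K V) (hB : ∀ x y : V, B x y = B y x)
    (R : Set V) (hR : IsGRRS B R)
    (θ : V ≃ₗ[K] V) (hθB : ∀ x y : V, B (θ x) (θ y) = B x y) (hθR : θ '' R = R)
    (hinv : ∀ x, θ (θ x) = x)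
    (Rbar RbarRe RbarIm : Set V)
    (hRbar : Rbar = {x | x ≠ 0 ∧ ∃ α ∈ R, x = (2 : K)⁻¹ • (α - θ α)})
    (hRbarRe : RbarRe = {x | x ≠ 0 ∧ ∃ α ∈ R, B α α ≠ 0 ∧ x = (2 : K)⁻¹ • (α - θ α)})
    (hRbarIm : RbarIm = Rbar \ RbarRe) :
    ∀ x ∈ RbarIm, ∀ y ∈ Rbar, y ≠ x → y ≠ -x → B x y ≠ 0 →
      (y + x ∈ Rbar ∨ y - x ∈ Rbar) := by
  subst hRbar hRbarRe hRbarIm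
  rintro x ⟨⟨hx0, α, hα, hxα⟩, hxre⟩ y ⟨hy0, β, hβ, hyβ⟩ hne hne' hxy
  have hαα : B α α = 0 := by
    by_contra h
    exact hxre ⟨hx0, α, hα, h, hxα⟩
  -- Any lift `γ ∈ R` of `y` with `(α, γ) ≠ 0` suffices: reflect it in the isotropic root `α`.
  have key : ∀ γ ∈ R, y = (2 : K)⁻¹ • (γ - θ γ) → B α γ ≠ 0 →
      (y + x ∈ {x | x ≠ 0 ∧ ∃ α ∈ R, x = (2 : K)⁻¹ • (α - θ α)} ∨
        y - x ∈ {x | x ≠ 0 ∧ ∃ α ∈ R, x = (2 : K)⁻¹ • (α - θ α)}) := by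
    intro γ hγ hyγ hαγ
    obtain ⟨r, hr, -, hr2⟩ := hR.reflect_iso α hα hαα
    have hmem := hr.mapsTo hγ
    rcases hr2 γ hγ hαγ with h | h <;> rw [h] at hmem
    · refine Or.inl ⟨fun h0 => hne' (eq_neg_of_add_eq_zero_left h0), _, hmem, ?_⟩
      rw [hyγ, hxα, map_add]
      module
    · refine Or.inr ⟨fun h0 => hne (sub_eq_zero.mp h0), _, hmem, ?_⟩
      rw [hyγ, hxα, map_sub]
      module
  by_cases h1 : B α β = 0
  · have hθβ : -θ β ∈ R := hR.neg_mem _ (hθR ▸ Set.mem_image_of_mem θ hβ)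
    refine key (-θ β) hθβ ?_ ?_
    · rw [hyβ, map_neg, hinv]
      module
    · intro h2
      -- Both `(α, β)` and `(α, θβ)` vanish, hence so does `(x, y)`.
      apply hxy
      rw [map_neg, neg_eq_zero] at h2
      have h3 : B (θ α) β = 0 := by rw [← hθB, hinv, h2]
      have h4 : B (θ α) (θ β) = 0 := by rw [hθB, h1]
      simp [hxα, hyβ, h1, h2, h3, h4]
  · exact key β hβ hyβ h1

end GRRS
end

section
/- Let Q and Q̄ be free abelian groups of finite rank, π : Q → Q̄ a surjective group homomorphism, F ⊆ Q∖{0} a finite subset, and φ̄ : Q̄ → ℝ a group homomorphism such that φ̄(π(α)) ≠ 0 for every α ∈ F with π(α) ≠ 0. Then there exists a group homomorphism φ : Q → ℝ such that φ(α) ≠ 0 for all α ∈ F, and φ(α) > 0 for every α ∈ F with φ̄(π(α)) > 0. -/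
/-!
A generic homomorphism `ψ : Q → ℝ` vanishes nowhere on the finite set `F`, since a real vector space
is not a finite union of proper subspaces. For all sufficiently small `ε > 0` the perturbation
`φbar ∘ π + ε ψ` keeps the sign of `φbar ∘ π` at those `α ∈ F` where `φbar (π α) ≠ 0`, and equals
`ε ψ α ≠ 0` at the others.
-/

open Filter Topology

theorem exists_addHom_real_ne_zero {Q : Type*} [AddCommGroup Q] [Module.Free ℤ Q]
    (F : Set Q) (hF : F.Finite) (h0 : (0 : Q) ∉ F) :
    ∃ ψ : Q →+ ℝ, ∀ α ∈ F, ψ α ≠ 0 := by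
  have : Finite F := hF
  let b := Module.Free.chooseBasis ℤ Q
  -- `Q` embeds in a real vector space by extending its coordinates from `ℤ` to `ℝ`.
  let e : Q →+ (Module.Free.ChooseBasisIndex ℤ Q →₀ ℝ) :=
    (Finsupp.mapRange.addMonoidHom (Int.castAddHom ℝ)).comp b.repr.toLinearMap.toAddMonoidHom
  have he : Function.Injective e :=
    (Finsupp.mapRange_injective (Int.castAddHom ℝ) (map_zero _) Int.cast_injective).comp
      b.repr.injective
  obtain ⟨f, hf⟩ := Module.exists_dual_forall_apply_ne_zero (K := ℝ) (fun α : F => e α)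
    (fun α h => h0 ((he (h.trans (map_zero e).symm)) ▸ α.2))
  exact ⟨f.toAddMonoidHom.comp e, fun α hα => hf ⟨α, hα⟩⟩

/-- let `π : Q → Q̄` be a surjection of free abelian groups of finite rank,
`F ⊆ Q ∖ {0}` finite, and `φ̄ : Q̄ → ℝ` a homomorphism with `φ̄(π α) ≠ 0` whenever `α ∈ F`
and `π α ≠ 0`.  Then there is a homomorphism `φ : Q → ℝ` with `φ α ≠ 0` for all `α ∈ F`
and `φ α > 0` whenever `α ∈ F` and `φ̄(π α) > 0`. -/
theorem extend_positive_system
    {Q Qbar : Type*} [AddCommGroup Q] [AddCommGroup Qbar]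
    [Module.Free ℤ Q] [Module.Finite ℤ Q]
    [Module.Free ℤ Qbar] [Module.Finite ℤ Qbar]
    (π : Q →+ Qbar) (hπ : Function.Surjective π)
    (F : Set Q) (hF : F.Finite) (h0 : (0 : Q) ∉ F)
    (φbar : Qbar →+ ℝ)
    (hφbar : ∀ α ∈ F, π α ≠ 0 → φbar (π α) ≠ 0) :
    ∃ φ : Q →+ ℝ, (∀ α ∈ F, φ α ≠ 0) ∧ (∀ α ∈ F, 0 < φbar (π α) → 0 < φ α) := by
  obtain ⟨ψ, hψ⟩ := exists_addHom_real_ne_zero F hF h0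
  have key : ∀ᶠ ε : ℝ in 𝓝[>] 0, ∀ α ∈ F, φbar (π α) + ε * ψ α ≠ 0 ∧
      (0 < φbar (π α) → 0 < φbar (π α) + ε * ψ α) := by
    rw [hF.eventually_all]
    intro α hα
    have ht : Tendsto (fun ε : ℝ => φbar (π α) + ε * ψ α) (𝓝[>] 0) (𝓝 (φbar (π α))) := by
      have hc : Continuous (fun ε : ℝ => φbar (π α) + ε * ψ α) := by fun_prop
      simpa using (hc.tendsto 0).mono_left nhdsWithin_le_nhds
    rcases lt_trichotomy (φbar (π α)) 0 with h | h | h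
    · filter_upwards [ht.eventually_lt_const h] with ε hε
      exact ⟨hε.ne, fun h' => absurd h' h.not_gt⟩
    · filter_upwards [self_mem_nhdsWithin] with ε hε
      simpa [h] using ⟨(Set.mem_Ioi.mp hε).ne', hψ α hα⟩
    · filter_upwards [ht.eventually_const_lt h] with ε hε
      exact ⟨hε.ne', fun _ => hε⟩
  obtain ⟨ε, hε⟩ := key.exists
  exact ⟨φbar.comp π + (AddMonoidHom.mulLeft ε).comp ψ,
    fun α hα => (hε α hα).1, fun α hα => (hε α hα).2⟩
end

section
/- If R is an irreducible GRRS in V containing at least one odd root, then the odd roots of R span V. -/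
/-!
Let `W` be the span of the odd roots. Reflections in real roots preserve odd roots. So if a real
root `α` is not orthogonal to an odd root `β`, then `r_α β` is odd and `β - r_α β` is a nonzero
multiple of `α`, whence `α ∈ W`. Since isotropic roots are odd, every root lies in `W` or is
orthogonal to `W`. Irreducibility then rules out roots outside `W`, and the roots span `V`.
-/

namespace GRRS

open Submodule

variable {K V : Type*} [Field K] [CharZero K] [AddCommGroup V] [Module K V]

/-- A real root that is not orthogonal to some odd root lies in the span of the odd roots. -/
theorem mem_span_odd_of_not_orthogonal (B : LinearMap.BilinForm K V)
    (hB : ∀ x y : V, B x y = B y x) (R : Set V) (hR : IsGRRS B R)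
    {α β : V} (hα : α ∈ R) (hαα : B α α ≠ 0) (hβ : β ∈ R) (hβodd : IsOddRoot B R β)
    (hαβ : B α β ≠ 0) : α ∈ span K {γ ∈ R | IsOddRoot B R γ} := by
  obtain ⟨n, hn, hmem⟩ := hR.reflect_real α hα hαα β hβ
  have hn0 : (n : K) ≠ 0 := by
    intro h
    rw [h, zero_mul] at hn
    exact hαβ ((mul_eq_zero.mp hn).resolve_left two_ne_zero)
  have hodd' : IsOddRoot B R (β - (n : K) • α) := by
    rcases hβodd with h | h
    · left
      simp only [map_sub, map_smul, LinearMap.sub_apply, LinearMap.smul_apply, smul_eq_mul,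
        hB β α, h]
      linear_combination (-(n : K)) * hn
    · right
      -- The reflection `r_α` maps the root `2β` to `2 r_α β`.
      obtain ⟨m, hm, hm'⟩ := hR.reflect_real α hα hαα _ h
      have hmn : (m : K) = 2 * n := by
        apply mul_right_cancel₀ hαα
        rw [map_smul, smul_eq_mul] at hm
        linear_combination 2 * hn - hm
      rwa [smul_sub, smul_smul, ← hmn]
  have hnα : (n : K) • α ∈ span K {γ ∈ R | IsOddRoot B R γ} := by
    have := sub_mem (subset_span ⟨hβ, hβodd⟩ : β ∈ span K {γ ∈ R | IsOddRoot B R γ})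
      (subset_span ⟨hmem, hodd'⟩)
    rwa [sub_sub_cancel] at this
  exact (smul_mem_iff _ hn0).mp hnα

/-- if an irreducible GRRS contains an odd root, then its odd roots span `V`. -/
theorem odd_roots_span {K V : Type*} [Field K] [CharZero K]
    [AddCommGroup V] [Module K V] [FiniteDimensional K V]
    (B : LinearMap.BilinForm K V) (hB : ∀ x y : V, B x y = B y x)
    (R : Set V) (hR : IsGRRS B R) (hirr : GRRSIrreducible B R)
    (hodd : ∃ α ∈ R, IsOddRoot B R α) :
    span K {α ∈ R | IsOddRoot B R α} = ⊤ := by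
  set W := span K {α ∈ R | IsOddRoot B R α} with hW
  rw [eq_top_iff, ← hR.spans, span_le]
  by_contra hsub
  obtain ⟨γ, hγ, hγW⟩ := Set.not_subset.mp hsub
  obtain ⟨α₀, hα₀, hα₀odd⟩ := hodd
  refine hirr ⟨R ∩ W, R \ W, ⟨α₀, hα₀, subset_span ⟨hα₀, hα₀odd⟩⟩, ⟨γ, hγ, hγW⟩,
    Set.inter_union_sdiff R W, Set.disjoint_sdiff_inter.symm, ?_⟩
  rintro α ⟨-, hαW⟩ β ⟨hβ, hβW⟩
  have hββ : B β β ≠ 0 := fun h => hβW (subset_span ⟨hβ, Or.inl h⟩)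
  have hle : W ≤ LinearMap.ker (B β) := by
    rw [hW, span_le]
    rintro δ ⟨hδ, hδodd⟩
    by_contra h
    exact hβW (mem_span_odd_of_not_orthogonal B hB R hR hβ hββ hδ hδodd h)
  rw [hB]
  exact hle hαW

end GRRS
end

section
/- Let R be an irreducible GRRS in V whose imaginary roots R_im form more than one imaginary component (W-orbit). Then R_im consists of exactly two imaginary components X and Y, and negation interchanges them: −X = Y. -/
/-!
If two imaginary roots `α`, `β` are not orthogonal, the isotropic reflection gives a root
`γ = β ± α`; it is real, and the reflection in `γ` sends `α` to `∓β`
(`weylRel_or_neg_of_form_ne_zero`). So with `S = Wα ∪ -Wα`, every imaginary root outside `S` is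
orthogonal to `S`. A real root `γ` that is not orthogonal to some `x ∈ S` is a multiple of
`x - r_γ x`, hence lies in `span S`. Therefore `S` together with the real roots not orthogonal to
`S` is contained in `span S`, while all remaining roots are orthogonal to `span S`. By
irreducibility nothing remains, so the imaginary roots are `Wα ∪ -Wα`
(`weylRel_or_neg_of_irreducible`). The two orbits are disjoint unless they coincide, in which case
there is only one imaginary component.
-/

namespace GRRS

open Submodule

variable {K V : Type*} [Field K] [CharZero K] [AddCommGroup V] [Module K V]

theorem reflectionOf_neg (B : LinearMap.BilinForm K V) (γ x : V) :
    reflectionOf B γ (-x) = -reflectionOf B γ x := by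
  simp only [reflectionOf, map_neg, mul_neg, neg_div, neg_smul]
  abel

theorem reflectionOf_reflectionOf (B : LinearMap.BilinForm K V) {γ : V} (hγ : B γ γ ≠ 0) (x : V) :
    reflectionOf B γ (reflectionOf B γ x) = x := by
  have h : 2 * B γ (reflectionOf B γ x) / B γ γ = -(2 * B γ x / B γ γ) := by
    simp only [reflectionOf, map_sub, map_smul, smul_eq_mul]
    field_simp
    ring
  rw [reflectionOf, h, reflectionOf]
  module

theorem weylRel_neg (B : LinearMap.BilinForm K V) (C : Set V) {x y : V} (h : weylRel B C x y) :
    weylRel B C (-x) (-y) := by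
  induction h with
  | refl => exact .refl
  | tail _ h ih =>
    obtain ⟨γ, hγ, rfl⟩ := h
    exact ih.tail ⟨γ, hγ, (reflectionOf_neg B γ _).symm⟩

theorem weylRel_symm (B : LinearMap.BilinForm K V) (R : Set V) {x y : V}
    (h : weylRel B (realRoots B R) x y) : weylRel B (realRoots B R) y x := by
  induction h with
  | refl => exact .refl
  | tail _ h ih =>
    obtain ⟨γ, hγ, rfl⟩ := h
    exact ih.head ⟨γ, hγ, (reflectionOf_reflectionOf B hγ.2 _).symm⟩

theorem reflectionOf_mem_imRoots {B : LinearMap.BilinForm K V} (hB : ∀ x y : V, B x y = B y x)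
    {R : Set V} (hR : IsGRRS B R) {γ x : V} (hγ : γ ∈ realRoots B R) (hx : x ∈ imRoots B R) :
    reflectionOf B γ x ∈ imRoots B R := by
  obtain ⟨n, hn, hmem⟩ := hR.reflect_real γ hγ.1 hγ.2 x hx.1
  have hn' : 2 * B γ x / B γ γ = n := by rw [hn, mul_div_cancel_right₀ _ hγ.2]
  refine ⟨by rwa [reflectionOf, hn'], ?_⟩
  simp only [reflectionOf, hn', map_sub, map_smul, smul_eq_mul, LinearMap.sub_apply,
    LinearMap.smul_apply, hx.2, hB x γ]
  linear_combination (-(n : K)) * hn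

/-- Non-orthogonal imaginary roots are Weyl-conjugate up to sign: the real root `β ± α` provided
by the isotropic reflection in `α` carries `α` to `∓β`. -/
theorem weylRel_or_neg_of_form_ne_zero {B : LinearMap.BilinForm K V}
    (hB : ∀ x y : V, B x y = B y x) {R : Set V} (hR : IsGRRS B R) {α β : V}
    (hα : α ∈ imRoots B R) (hβ : β ∈ imRoots B R) (h : B α β ≠ 0) :
    weylRel B (realRoots B R) α β ∨ weylRel B (realRoots B R) α (-β) := by
  obtain ⟨r, hr, -, hr₂⟩ := hR.reflect_iso α hα.1 hα.2
  have hmem := hr.mapsTo hβ.1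
  have hα0 := hα.2
  have hβ0 := hβ.2
  rcases hr₂ β hβ.1 h with e | e <;> rw [e] at hmem
  · right
    have hn : B (β + α) (β + α) = 2 * B α β := by
      simp only [map_add, LinearMap.add_apply, hα0, hβ0, hB β α]; ring
    refine .single ⟨β + α, ⟨hmem, by rw [hn]; simpa using h⟩, ?_⟩
    have hc : 2 * B (β + α) α / B (β + α) (β + α) = 1 := by
      rw [hn]
      simp only [map_add, LinearMap.add_apply, hα0, hB β α, add_zero]
      field_simp
    rw [reflectionOf, hc]
    module
  · left
    have hn : B (β - α) (β - α) = -(2 * B α β) := by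
      simp only [map_sub, LinearMap.sub_apply, hα0, hβ0, hB β α]; ring
    refine .single ⟨β - α, ⟨hmem, by rw [hn]; simpa using h⟩, ?_⟩
    have hc : 2 * B (β - α) α / B (β - α) (β - α) = -1 := by
      rw [hn]
      simp only [map_sub, LinearMap.sub_apply, hα0, hB β α, sub_zero]
      field_simp
    rw [reflectionOf, hc]
    module

theorem weylRel_or_neg_of_irreducible {B : LinearMap.BilinForm K V}
    (hB : ∀ x y : V, B x y = B y x) {R : Set V} (hR : IsGRRS B R) (hirr : GRRSIrreducible B R)
    {α β : V} (hα : α ∈ imRoots B R) (hβ : β ∈ imRoots B R) :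
    weylRel B (realRoots B R) α β ∨ weylRel B (realRoots B R) (-α) β := by
  set S : Set V := {x ∈ imRoots B R |
    weylRel B (realRoots B R) α x ∨ weylRel B (realRoots B R) (-α) x} with hS
  set R₁ : Set V := S ∪ {γ ∈ realRoots B R | ∃ x ∈ S, B γ x ≠ 0} with hR₁
  have hαS : α ∈ S := ⟨hα, .inl .refl⟩
  have hspan : ∀ γ ∈ R₁, γ ∈ span K S := by
    rintro γ (hγ | ⟨hγ, x, hx, hne⟩)
    · exact subset_span hγ
    · have hx' : reflectionOf B γ x ∈ S :=
        ⟨reflectionOf_mem_imRoots hB hR hγ hx.1,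
          hx.2.imp (·.tail ⟨γ, hγ, rfl⟩) (·.tail ⟨γ, hγ, rfl⟩)⟩
      have hc : 2 * B γ x / B γ γ ≠ 0 := div_ne_zero (by simpa using hne) hγ.2
      have hdiff := sub_mem (subset_span (R := K) hx) (subset_span (R := K) hx')
      rw [reflectionOf, sub_sub_cancel] at hdiff
      exact (smul_mem_iff _ hc).1 hdiff
  have horth : ∀ δ ∈ R \ R₁, ∀ x ∈ S, B δ x = 0 := by
    rintro δ ⟨hδ, hδ₁⟩ x hx
    by_contra hne
    refine hδ₁ ?_
    by_cases hδ0 : B δ δ = 0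
    · refine .inl ⟨⟨hδ, hδ0⟩, ?_⟩
      rcases weylRel_or_neg_of_form_ne_zero hB hR hx.1 ⟨hδ, hδ0⟩ (by rwa [hB]) with h | h
      · exact hx.2.imp (·.trans h) (·.trans h)
      · have h' := weylRel_neg B _ h
        rw [neg_neg] at h'
        rcases hx.2 with hx | hx
        · exact .inr ((weylRel_neg B _ hx).trans h')
        · have hx' := weylRel_neg B _ hx
          rw [neg_neg] at hx'
          exact .inl (hx'.trans h')
    · exact .inr ⟨⟨hδ, hδ0⟩, x, hx, hne⟩
  have hsub : R₁ ⊆ R := by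
    rintro γ (hγ | hγ)
    exacts [hγ.1.1, hγ.1.1]
  by_contra hcon
  refine hirr ⟨R₁, R \ R₁, ⟨α, .inl hαS⟩, ⟨β, hβ.1, ?_⟩, Set.union_sdiff_cancel hsub,
    Set.disjoint_sdiff_right, ?_⟩
  · rintro (h | h)
    exacts [hcon h.2, h.1.2 hβ.2]
  · intro γ hγ δ hδ
    have hle : span K S ≤ LinearMap.ker (B δ) := span_le.2 fun x hx => horth δ hδ x hx
    rw [hB]
    exact hle (hspan γ hγ)

/-- if the imaginary roots of an irreducible GRRS form more than one
imaginary component (orbit of the Weyl group `W` generated by reflections in the real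
roots), then there are exactly two imaginary components `X` and `Y`, and `−X = Y`. -/
theorem two_imaginary_components {K V : Type*} [Field K] [CharZero K]
    [AddCommGroup V] [Module K V] [FiniteDimensional K V]
    (B : LinearMap.BilinForm K V) (hB : ∀ x y : V, B x y = B y x)
    (R : Set V) (hR : IsGRRS B R) (hirr : GRRSIrreducible B R)
    (hmany : ∃ α ∈ imRoots B R, ∃ β ∈ imRoots B R,
      ¬ weylRel B (realRoots B R) α β) :
    ∃ X Y : Set V,
      (∃ α ∈ imRoots B R, X = {x ∈ imRoots B R | weylRel B (realRoots B R) α x}) ∧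
      (∃ β ∈ imRoots B R, Y = {x ∈ imRoots B R | weylRel B (realRoots B R) β x}) ∧
      X ∪ Y = imRoots B R ∧ Disjoint X Y ∧ -X = Y := by
  obtain ⟨α, hα, β, hβ, hαβ⟩ := hmany
  have hneg : ∀ x ∈ imRoots B R, -x ∈ imRoots B R := fun x hx =>
    ⟨hR.neg_mem x hx.1, by simpa using hx.2⟩
  have hcover := fun x (hx : x ∈ imRoots B R) => weylRel_or_neg_of_irreducible hB hR hirr hα hx
  refine ⟨_, _, ⟨α, hα, rfl⟩, ⟨-α, hneg α hα, rfl⟩, ?_, ?_, ?_⟩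
  · ext x
    refine ⟨?_, fun hx => (hcover x hx).imp (⟨hx, ·⟩) (⟨hx, ·⟩)⟩
    rintro (h | h)
    exacts [h.1, h.1]
  -- A common element would make `-α` conjugate to `α`, so that `β` would be conjugate to `α`.
  · refine Set.disjoint_left.2 fun x hx hx' => ?_
    rcases hcover β hβ with h | h
    · exact hαβ h
    · exact hαβ ((hx.2.trans (weylRel_symm B R hx'.2)).trans h)
  · ext x
    constructor
    · rintro ⟨hx, h⟩
      exact ⟨by simpa using hneg _ hx, by simpa using weylRel_neg B _ h⟩
    · rintro ⟨hx, h⟩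
      exact ⟨hneg x hx, by simpa using weylRel_neg B _ h⟩

end GRRS
end
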